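/- arXiv:1811.06955 — 4 statements merged into one kernel-verified Lean document; each statement's English description precedes it below -/
import Mathlib

section
/- Let R be a commutative ring, M an R-module, and φ : M → R an R-linear map. Suppose y ∈ M is such that φ(y) + 1 is a unit of R. Define x ▷ y = (φ(y) + 1)·x − φ(x)·y and z ▷⁻¹ y = (φ(y) + 1)⁻¹·(z + φ(z)·y). Then for every x ∈ M, (x ▷ y) ▷⁻¹ y = x. -/
/-- The operation `x ▷ y = (φ(y) + 1) • x - φ(x) • y` on an `R`-module `M`. -/
def tri {R M : Type*} [CommRing R] [AddCommGroup M] [Module R M]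
    (φ : M →ₗ[R] R) (x y : M) : M :=
  (φ y + 1) • x - φ x • y

/-- The operation `z ▷⁻¹ y = (φ(y) + 1)⁻¹ • (z + φ(z) • y)` on an `R`-module `M`,
where `(φ(y) + 1)⁻¹` is `Ring.inverse (φ y + 1)` (the inverse when `φ(y) + 1` is a unit). -/
noncomputable def triInv {R M : Type*} [CommRing R] [AddCommGroup M] [Module R M]
    (φ : M →ₗ[R] R) (z y : M) : M :=
  Ring.inverse (φ y + 1) • (z + φ z • y)

/-- The map `φ` is invariant under right translation by `▷`. -/
theorem map_tri {R M : Type*} [CommRing R] [AddCommGroup M] [Module R M]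
    (φ : M →ₗ[R] R) (x y : M) : φ (tri φ x y) = φ x := by
  simp only [tri, map_sub, map_smul, smul_eq_mul]
  ring

/-- Half of (Q2): if `φ(y) + 1` is a unit of `R`, then `(x ▷ y) ▷⁻¹ y = x`. -/
theorem tri_triInv {R M : Type*} [CommRing R] [AddCommGroup M] [Module R M]
    (φ : M →ₗ[R] R) (y : M) (hy : IsUnit (φ y + 1)) :
    ∀ x : M, triInv φ (tri φ x y) y = x := by
  intro x
  rw [triInv, map_tri, tri, sub_add_cancel, smul_smul, Ring.inverse_mul_cancel _ hy, one_smul]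
end

section
/- Let R be a commutative ring, M an R-module, and φ : M → R an R-linear map. Suppose y ∈ M is such that φ(y) + 1 is a unit of R. Define x ▷ y = (φ(y) + 1)·x − φ(x)·y and z ▷⁻¹ y = (φ(y) + 1)⁻¹·(z + φ(z)·y). Then for every x ∈ M, (x ▷⁻¹ y) ▷ y = x. -/
/-- Half of (Q2): if `φ(y) + 1` is a unit of `R`, then `(x ▷⁻¹ y) ▷ y = x`. -/
theorem triInv_tri {R M : Type*} [CommRing R] [AddCommGroup M] [Module R M]
    (φ : M →ₗ[R] R) (y : M) (hy : IsUnit (φ y + 1)) :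
    ∀ x : M, tri φ (triInv φ x y) y = x := by
  intro x
  have hφ : φ (triInv φ x y) = φ x := by
    simp only [triInv, map_smul, map_add, smul_eq_mul]
    linear_combination φ x * Ring.inverse_mul_cancel _ hy
  rw [tri, hφ, triInv, smul_smul, Ring.mul_inverse_cancel _ hy, one_smul, add_sub_cancel_right]
end

section
/- Let Λ₂ = ℤ[t₁^{±1}, t₂^{±1}] be the ring of Laurent polynomials in two variables with integer coefficients. Then the Λ₂-modules Λ₂ ⊕ Λ₂/(2t₁ − t₁²) ⊕ Λ₂/(2t₁ − 1) ⊕ Λ₂ and Λ₂ ⊕ Λ₂/(t₁ + t₂ − t₁t₂) ⊕ Λ₂/(t₁ + t₂ − 1) ⊕ Λ₂ are not isomorphic as Λ₂-modules. -/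
/-- `Λ₂ = ℤ[t₁^{±1}, t₂^{±1}]`, the ring of Laurent polynomials in two variables with
integer coefficients, realized as the additive monoid algebra of `ℤ` over the group
`Fin 2 →₀ ℤ`. -/
abbrev Lambda2 : Type := AddMonoidAlgebra ℤ (Fin 2 →₀ ℤ)

/-- The variable `tᵢ` of `Λ₂`, the monomial corresponding to the `i`-th standard generator. -/
noncomputable def tvar (i : Fin 2) : Lambda2 :=
  AddMonoidAlgebra.single (Finsupp.single i 1) 1

/-- Evaluation of Laurent polynomials in two variables at a pair of units. -/
noncomputable def Lambda2.eval {R : Type*} [CommRing R] (u v : Rˣ) : Lambda2 →ₐ[ℤ] R :=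
  AddMonoidAlgebra.lift ℤ R (Fin 2 →₀ ℤ)
    { toFun := fun n => ((u ^ (n.toAdd 0) * v ^ (n.toAdd 1) : Rˣ) : R)
      map_one' := by simp
      map_mul' := fun m n => by
        rw [← Units.val_mul]
        congr 1
        simp only [toAdd_mul, Finsupp.add_apply, zpow_add]
        exact mul_mul_mul_comm _ _ _ _ }

lemma Lambda2.eval_tvar_zero {R : Type*} [CommRing R] (u v : Rˣ) :
    Lambda2.eval u v (tvar 0) = u := by
  simp [Lambda2.eval, tvar, AddMonoidAlgebra.lift_single]

lemma Lambda2.eval_tvar_one {R : Type*} [CommRing R] (u v : Rˣ) :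
    Lambda2.eval u v (tvar 1) = v := by
  simp [Lambda2.eval, tvar, AddMonoidAlgebra.lift_single]

/-- If `c ≠ 0` and `R × R/(a) × R/(b) × R ≃ R × R/(c) × R/(d) × R` over a domain `R`, then `c`
divides `a * b`: the product `a * b` kills the torsion of the left-hand side. -/
lemma dvd_mul_of_linearEquiv_prod_quotient {R : Type*} [CommRing R] [NoZeroDivisors R]
    {a b c d : R} (hc : c ≠ 0)
    (e : (R × (R ⧸ Ideal.span {a}) × (R ⧸ Ideal.span {b}) × R) ≃ₗ[R]
      (R × (R ⧸ Ideal.span {c}) × (R ⧸ Ideal.span {d}) × R)) : c ∣ a * b := by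
  have smul_eq_zero_of_dvd {r s : R} (h : r ∣ s) (q : R ⧸ Ideal.span {r}) : s • q = 0 := by
    obtain ⟨q, rfl⟩ := Ideal.Quotient.mk_surjective q
    exact Ideal.Quotient.eq_zero_iff_mem.2
      (Ideal.mem_span_singleton.2 (h.mul_right q))
  set x : R × (R ⧸ Ideal.span {c}) × (R ⧸ Ideal.span {d}) × R := (0, 1, 0, 0) with hx
  have hcx : c • e.symm x = 0 := by
    rw [← map_smul, hx]
    simp [smul_eq_zero_of_dvd (dvd_refl c)]
  have habx : (a * b) • e.symm x = 0 := by
    generalize e.symm x = y at hcx ⊢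
    obtain ⟨p, q, r, s⟩ := y
    simp only [Prod.smul_mk, Prod.mk_eq_zero, smul_eq_mul, mul_eq_zero, hc, false_or] at hcx
    simp [hcx.1, hcx.2.2.2, smul_eq_zero_of_dvd (dvd_mul_right a b),
      smul_eq_zero_of_dvd (dvd_mul_left b a)]
  rw [← map_smul, LinearEquiv.map_eq_zero_iff, hx] at habx
  simp only [Prod.smul_mk, Prod.mk_eq_zero] at habx
  have h : Ideal.Quotient.mk (Ideal.span {c}) (a * b) = 0 := by
    rw [← habx.2.1, Algebra.smul_def, mul_one, Ideal.Quotient.algebraMap_eq]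
  exact Ideal.mem_span_singleton.1 (Ideal.Quotient.eq_zero_iff_mem.1 h)


/-- The `Λ₂`-modules `Λ₂ ⊕ Λ₂/(2t₁ - t₁²) ⊕ Λ₂/(2t₁ - 1) ⊕ Λ₂` and
`Λ₂ ⊕ Λ₂/(t₁ + t₂ - t₁t₂) ⊕ Λ₂/(t₁ + t₂ - 1) ⊕ Λ₂` are not isomorphic. -/
theorem alexander_modules_not_isomorphic :
    ¬ Nonempty
      ((Lambda2 × (Lambda2 ⧸ Ideal.span {2 * tvar 0 - tvar 0 ^ 2}) ×
          (Lambda2 ⧸ Ideal.span {2 * tvar 0 - 1}) × Lambda2) ≃ₗ[Lambda2]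
        (Lambda2 × (Lambda2 ⧸ Ideal.span {tvar 0 + tvar 1 - tvar 0 * tvar 1}) ×
          (Lambda2 ⧸ Ideal.span {tvar 0 + tvar 1 - 1}) × Lambda2)) := by
  rintro ⟨e⟩
  have hc : tvar 0 + tvar 1 - tvar 0 * tvar 1 ≠ 0 := fun h => by
    have := congrArg (Lambda2.eval (1 : ℤˣ) 1) h
    simp [Lambda2.eval_tvar_zero, Lambda2.eval_tvar_one] at this
  have hdvd := map_dvd (Lambda2.eval (Units.mk0 (3 : ℚ) (by norm_num))
    (Units.mk0 (3 / 2) (by norm_num))) (dvd_mul_of_linearEquiv_prod_quotient hc e)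
  simp only [map_sub, map_add, map_mul, map_pow, map_one, map_ofNat, Lambda2.eval_tvar_zero,
    Lambda2.eval_tvar_one, Units.val_mk0] at hdvd
  norm_num at hdvd
end

section
/- Let Λ₂ = ℤ[t₁^{±1}, t₂^{±1}] be the ring of Laurent polynomials in two variables with integer coefficients. Then the Λ₂-modules Λ₂ ⊕ Λ₂/(2t₂ − t₂²) ⊕ Λ₂/(2t₂ − 1) ⊕ Λ₂ and Λ₂ ⊕ Λ₂/(t₁ + t₂ − t₁t₂) ⊕ Λ₂/(t₁ + t₂ − 1) ⊕ Λ₂ are not isomorphic as Λ₂-modules. -/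
/-- Evaluation of Laurent polynomials at a point of the torus `(ℚˣ)²`. -/
noncomputable def evalLambda2 (a b : ℚ) (ha : a ≠ 0) (hb : b ≠ 0) : Lambda2 →ₐ[ℤ] ℚ :=
  AddMonoidAlgebra.lift ℤ ℚ (Fin 2 →₀ ℤ)
    { toFun := fun m => a ^ (m.toAdd 0) * b ^ (m.toAdd 1)
      map_one' := by simp
      map_mul' := fun m n => by
        simp only [toAdd_mul, Finsupp.add_apply, zpow_add₀ ha, zpow_add₀ hb]
        ring }

theorem evalLambda2_tvar_zero (a b : ℚ) (ha : a ≠ 0) (hb : b ≠ 0) :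
    evalLambda2 a b ha hb (tvar 0) = a := by
  simp [evalLambda2, tvar, AddMonoidAlgebra.lift_single]

theorem evalLambda2_tvar_one (a b : ℚ) (ha : a ≠ 0) (hb : b ≠ 0) :
    evalLambda2 a b ha hb (tvar 1) = b := by
  simp [evalLambda2, tvar, AddMonoidAlgebra.lift_single]

/-- If `R ⊕ R/(p₁) ⊕ R/(p₂) ⊕ R ≃ R ⊕ R/(q₁) ⊕ R/(q₂) ⊕ R` over a domain and `q₁ ≠ 0`, then `q₁`
divides `p₁ * p₂`, since `p₁ * p₂` annihilates the torsion of the source. -/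
theorem dvd_mul_of_linearEquiv {R : Type*} [CommRing R] [NoZeroDivisors R] {p₁ p₂ q₁ q₂ : R}
    (hq : q₁ ≠ 0)
    (e : (R × (R ⧸ Ideal.span {p₁}) × (R ⧸ Ideal.span {p₂}) × R) ≃ₗ[R]
      (R × (R ⧸ Ideal.span {q₁}) × (R ⧸ Ideal.span {q₂}) × R)) :
    q₁ ∣ p₁ * p₂ := by
  have smul_one_eq_zero : ∀ r s : R,
      r • (Ideal.Quotient.mk (Ideal.span {s}) 1) = 0 ↔ s ∣ r := fun r s => by
    rw [← Ideal.mem_span_singleton, ← Ideal.Quotient.eq_zero_iff_mem, Algebra.smul_def, map_one,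
      mul_one]
    rfl
  have smul_eq_zero_of_dvd : ∀ r s : R, s ∣ r → ∀ x : R ⧸ Ideal.span {s}, r • x = 0 := by
    intro r s h x
    obtain ⟨x, rfl⟩ := Ideal.Quotient.mk_surjective x
    exact Ideal.Quotient.eq_zero_iff_mem.2
      (Ideal.mem_span_singleton.2 (h.mul_right x))
  set y : R × (R ⧸ Ideal.span {q₁}) × (R ⧸ Ideal.span {q₂}) × R :=
    (0, Ideal.Quotient.mk _ 1, 0, 0) with hy
  have hqy : q₁ • y = 0 := by
    simp only [hy, Prod.smul_mk, smul_zero, (smul_one_eq_zero q₁ q₁).2 dvd_rfl]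
    rfl
  have hqx : q₁ • e.symm y = 0 := by rw [← map_smul, hqy, map_zero]
  have hpx : (p₁ * p₂) • e.symm y = 0 := by
    generalize e.symm y = x at hqx ⊢
    obtain ⟨a, b, c, d⟩ := x
    simp only [Prod.smul_mk, Prod.mk_eq_zero, smul_eq_mul, mul_eq_zero, hq, false_or] at hqx
    obtain ⟨rfl, -, -, rfl⟩ := hqx
    simp only [Prod.smul_mk, smul_zero, Prod.mk_eq_zero, true_and, and_true]
    exact ⟨smul_eq_zero_of_dvd _ _ (dvd_mul_right _ _) b,
      smul_eq_zero_of_dvd _ _ (dvd_mul_left _ _) c⟩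
  have hpy : (p₁ * p₂) • y = 0 := by
    rw [← e.apply_symm_apply y, ← map_smul, hpx, map_zero]
  simp only [hy, Prod.smul_mk, Prod.mk_eq_zero] at hpy
  exact (smul_one_eq_zero _ _).1 hpy.2.1

/-- The `Λ₂`-modules `Λ₂ ⊕ Λ₂/(2t₂ - t₂²) ⊕ Λ₂/(2t₂ - 1) ⊕ Λ₂` and
`Λ₂ ⊕ Λ₂/(t₁ + t₂ - t₁t₂) ⊕ Λ₂/(t₁ + t₂ - 1) ⊕ Λ₂` are not isomorphic. -/
theorem alexander_modules_not_isomorphic_swapped :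
    ¬ Nonempty
      ((Lambda2 × (Lambda2 ⧸ Ideal.span {2 * tvar 1 - tvar 1 ^ 2}) ×
          (Lambda2 ⧸ Ideal.span {2 * tvar 1 - 1}) × Lambda2) ≃ₗ[Lambda2]
        (Lambda2 × (Lambda2 ⧸ Ideal.span {tvar 0 + tvar 1 - tvar 0 * tvar 1}) ×
          (Lambda2 ⧸ Ideal.span {tvar 0 + tvar 1 - 1}) × Lambda2)) := by
  rintro ⟨e⟩
  have hq : tvar 0 + tvar 1 - tvar 0 * tvar 1 ≠ 0 := fun h => by
    have heval := congrArg (evalLambda2 1 1 one_ne_zero one_ne_zero) h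
    simp [evalLambda2_tvar_zero, evalLambda2_tvar_one] at heval
  -- At `(t₁, t₂) = (3/2, 3)` the divisor vanishes but the product does not.
  have h := map_dvd (evalLambda2 (3 / 2) 3 (by norm_num) (by norm_num))
    (dvd_mul_of_linearEquiv hq e)
  simp only [map_sub, map_add, map_mul, map_pow, map_one, map_ofNat, evalLambda2_tvar_zero,
    evalLambda2_tvar_one] at h
  norm_num at h
end
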